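/- Let N ≥ 1 and p₁, p₂, q₁, q₂ ≥ 0. Assume there exist α ≥ 1 and β ≥ 1 such that 1 + (p₁ − 1)/α + p₂/β > 1 + 2/N and 1 + q₁/α + (q₂ − 1)/β > 1 + 2/N. Then there exist nonnegative measurable functions u₀, v₀ on ℝ^N, not both identically zero, such that the strongly coupled system (SC) possesses a global-in-time solution (u,v) on ℝ^N × (0,∞) with u(x,t) > 0 and v(x,t) > 0 for a.e. x ∈ ℝ^N and all t > 0. -/

import Mathlib

open MeasureTheory ENNReal Filter

noncomputable section

/-- Euclidean space `ℝ^N`. -/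
abbrev Euc (N : ℕ) := EuclideanSpace ℝ (Fin N)

/-- The heat semigroup applied to a (nonnegative) function `φ` on `ℝ^N`, with values in `[0,∞]`:
`[S(t)φ](x) = ∫ (4πt)^{-N/2} exp(-|x-y|²/(4t)) φ(y) dy`. -/
noncomputable def heatS (N : ℕ) (t : ℝ) (φ : Euc N → ℝ) (x : Euc N) : ℝ≥0∞ :=
  ∫⁻ y, ENNReal.ofReal
    ((4 * Real.pi * t) ^ (-(N : ℝ) / 2) * Real.exp (-‖x - y‖ ^ 2 / (4 * t)) * φ y)

/-- The `L^∞` norm of `S(t)φ` on `ℝ^N`. -/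
noncomputable def heatSup (N : ℕ) (t : ℝ) (φ : Euc N → ℝ) : ℝ≥0∞ :=
  essSup (heatS N t φ) volume

/-- The `L^{r,∞}(E)` quasinorm: for `1 < r < ∞` it is
`sup_{λ>0} λ |{x ∈ E : |f x| > λ}|^{1/r}`; for `r = 1` (resp. `r = ∞`)
it is the usual `L¹(E)` (resp. `L^∞(E)`) norm. -/
noncomputable def wnorm (N : ℕ) (r : ℝ≥0∞) (f : Euc N → ℝ) (E : Set (Euc N)) : ℝ≥0∞ :=
  if r = 1 then ∫⁻ x in E, ENNReal.ofReal |f x|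
  else if r = ⊤ then essSup (fun x => ENNReal.ofReal |f x|) (volume.restrict E)
  else ⨆ (l : ℝ) (_ : 0 < l), ENNReal.ofReal l * (volume {x ∈ E | l < |f x|}) ^ (1 / r.toReal)

/-- The uniformly local quasinorm `|||f|||_{r,ρ} = sup_x ‖f‖_{L^{r,∞}(B(x,ρ))}`
(for `r = ∞` it is the `L^∞(ℝ^N)` norm). -/
noncomputable def ulocNorm (N : ℕ) (r : ℝ≥0∞) (ρ : ℝ) (f : Euc N → ℝ) : ℝ≥0∞ :=
  if r = ⊤ then essSup (fun x => ENNReal.ofReal |f x|) volume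
  else ⨆ x : Euc N, wnorm N r f (Metric.ball x ρ)

/-- `u ∈ L^∞(τ, T-τ; L^∞(ℝ^N))` for every `τ ∈ (0, T/2)`. -/
def LocBdd (N : ℕ) (T : ℝ≥0∞) (u : Euc N → ℝ → ℝ) : Prop :=
  ∀ τ : ℝ, 0 < τ → ENNReal.ofReal (2 * τ) < T →
    ∃ M : ℝ, ∀ t : ℝ, τ ≤ t → ENNReal.ofReal (t + τ) ≤ T →
      ∀ᵐ x ∂(volume : Measure (Euc N)), |u x t| ≤ M

/-- Regularity requirements on a pair `(u,v)`: nonnegativity, joint measurability and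
uniform boundedness away from `t = 0` and `t = T`. -/
def PairRegular (N : ℕ) (T : ℝ≥0∞) (u v : Euc N → ℝ → ℝ) : Prop :=
  (∀ x t, 0 ≤ u x t) ∧ (∀ x t, 0 ≤ v x t) ∧
  Measurable (Function.uncurry u) ∧ Measurable (Function.uncurry v) ∧
  LocBdd N T u ∧ LocBdd N T v

/-- The Duhamel identities for the system (S) `∂ₜu = Δu + v^p`, `∂ₜv = Δv + u^q` at time `t`. -/
def DuhamelSys (N : ℕ) (p q : ℝ) (u₀ v₀ : Euc N → ℝ) (u v : Euc N → ℝ → ℝ) (t : ℝ) : Prop :=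
  (∀ᵐ x ∂(volume : Measure (Euc N)), ENNReal.ofReal (u x t) =
      heatS N t u₀ x + ∫⁻ s in Set.Ioo 0 t, heatS N (t - s) (fun y => v y s ^ p) x) ∧
  (∀ᵐ x ∂(volume : Measure (Euc N)), ENNReal.ofReal (v x t) =
      heatS N t v₀ x + ∫⁻ s in Set.Ioo 0 t, heatS N (t - s) (fun y => u y s ^ q) x)

/-- The Duhamel inequalities (`≥`, with finite left-hand side) for the system (S) at time `t`. -/
def DuhamelSuperSys (N : ℕ) (p q : ℝ) (u₀ v₀ : Euc N → ℝ) (u v : Euc N → ℝ → ℝ) (t : ℝ) : Prop :=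
  (∀ᵐ x ∂(volume : Measure (Euc N)),
      heatS N t u₀ x + (∫⁻ s in Set.Ioo 0 t, heatS N (t - s) (fun y => v y s ^ p) x) ≤
        ENNReal.ofReal (u x t)) ∧
  (∀ᵐ x ∂(volume : Measure (Euc N)),
      heatS N t v₀ x + (∫⁻ s in Set.Ioo 0 t, heatS N (t - s) (fun y => u y s ^ q) x) ≤
        ENNReal.ofReal (v x t))

/-- `(u,v)` is a solution of the system (S) on `ℝ^N × (0,T)`. -/
def IsSolSys (N : ℕ) (p q : ℝ) (u₀ v₀ : Euc N → ℝ) (T : ℝ≥0∞) (u v : Euc N → ℝ → ℝ) : Prop :=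
  PairRegular N T u v ∧
  ∀ t : ℝ, 0 < t → ENNReal.ofReal t < T → DuhamelSys N p q u₀ v₀ u v t

/-- `(u,v)` is a supersolution of the system (S) on `ℝ^N × (0,T)`. -/
def IsSuperSys (N : ℕ) (p q : ℝ) (u₀ v₀ : Euc N → ℝ) (T : ℝ≥0∞) (u v : Euc N → ℝ → ℝ) : Prop :=
  PairRegular N T u v ∧
  ∀ t : ℝ, 0 < t → ENNReal.ofReal t < T → DuhamelSuperSys N p q u₀ v₀ u v t

/-- `(u,v)` is the minimal solution of the system (S) on `ℝ^N × (0,T)`. -/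
def IsMinSolSys (N : ℕ) (p q : ℝ) (u₀ v₀ : Euc N → ℝ) (T : ℝ≥0∞)
    (u v : Euc N → ℝ → ℝ) : Prop :=
  IsSolSys N p q u₀ v₀ T u v ∧
  ∀ u' v' : Euc N → ℝ → ℝ, IsSolSys N p q u₀ v₀ T u' v' →
    ∀ t : ℝ, 0 < t → ENNReal.ofReal t < T →
      (∀ᵐ x ∂(volume : Measure (Euc N)), u x t ≤ u' x t) ∧
      (∀ᵐ x ∂(volume : Measure (Euc N)), v x t ≤ v' x t)

/-- Regularity requirements on a scalar function `w`. -/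
def ScalarRegular (N : ℕ) (T : ℝ≥0∞) (w : Euc N → ℝ → ℝ) : Prop :=
  (∀ x t, 0 ≤ w x t) ∧ Measurable (Function.uncurry w) ∧ LocBdd N T w

/-- The Duhamel identity for the scalar problem (E) `∂ₜw = Δw + α w^A + β w^B` at time `t`. -/
def DuhamelScalar (N : ℕ) (α β A B : ℝ) (w₀ : Euc N → ℝ) (w : Euc N → ℝ → ℝ) (t : ℝ) : Prop :=
  ∀ᵐ x ∂(volume : Measure (Euc N)), ENNReal.ofReal (w x t) =
    heatS N t w₀ x +
      ∫⁻ s in Set.Ioo 0 t, heatS N (t - s) (fun y => α * w y s ^ A + β * w y s ^ B) x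

/-- The Duhamel inequality (`≥`, with finite left-hand side) for the scalar problem (E). -/
def DuhamelSuperScalar (N : ℕ) (α β A B : ℝ) (w₀ : Euc N → ℝ) (w : Euc N → ℝ → ℝ)
    (t : ℝ) : Prop :=
  ∀ᵐ x ∂(volume : Measure (Euc N)),
    heatS N t w₀ x +
        (∫⁻ s in Set.Ioo 0 t, heatS N (t - s) (fun y => α * w y s ^ A + β * w y s ^ B) x) ≤
      ENNReal.ofReal (w x t)

/-- `w` is a solution of the scalar problem (E) on `ℝ^N × (0,T)`. -/
def IsSolScalar (N : ℕ) (α β A B : ℝ) (w₀ : Euc N → ℝ) (T : ℝ≥0∞)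
    (w : Euc N → ℝ → ℝ) : Prop :=
  ScalarRegular N T w ∧
  ∀ t : ℝ, 0 < t → ENNReal.ofReal t < T → DuhamelScalar N α β A B w₀ w t

/-- `w` is a supersolution of the scalar problem (E) on `ℝ^N × (0,T)`. -/
def IsSuperScalar (N : ℕ) (α β A B : ℝ) (w₀ : Euc N → ℝ) (T : ℝ≥0∞)
    (w : Euc N → ℝ → ℝ) : Prop :=
  ScalarRegular N T w ∧
  ∀ t : ℝ, 0 < t → ENNReal.ofReal t < T → DuhamelSuperScalar N α β A B w₀ w t

/-- The Duhamel identities for the strongly coupled system (SC)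
`∂ₜu = Δu + u^{p₁} v^{p₂}`, `∂ₜv = Δv + u^{q₁} v^{q₂}` at time `t`. -/
def DuhamelSC (N : ℕ) (p₁ p₂ q₁ q₂ : ℝ) (u₀ v₀ : Euc N → ℝ) (u v : Euc N → ℝ → ℝ)
    (t : ℝ) : Prop :=
  (∀ᵐ x ∂(volume : Measure (Euc N)), ENNReal.ofReal (u x t) =
      heatS N t u₀ x +
        ∫⁻ s in Set.Ioo 0 t, heatS N (t - s) (fun y => u y s ^ p₁ * v y s ^ p₂) x) ∧
  (∀ᵐ x ∂(volume : Measure (Euc N)), ENNReal.ofReal (v x t) =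
      heatS N t v₀ x +
        ∫⁻ s in Set.Ioo 0 t, heatS N (t - s) (fun y => u y s ^ q₁ * v y s ^ q₂) x)

/-- `(u,v)` is a solution of the strongly coupled system (SC) on `ℝ^N × (0,T)`. -/
def IsSolSC (N : ℕ) (p₁ p₂ q₁ q₂ : ℝ) (u₀ v₀ : Euc N → ℝ) (T : ℝ≥0∞)
    (u v : Euc N → ℝ → ℝ) : Prop :=
  PairRegular N T u v ∧
  ∀ t : ℝ, 0 < t → ENNReal.ofReal t < T → DuhamelSC N p₁ p₂ q₁ q₂ u₀ v₀ u v t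

/-- Convolution of the heat kernel with a Gaussian. -/
lemma gauss_conv (N : ℕ) (τ b : ℝ) (hτ : 0 < τ) (hb : 0 < b) (x : Euc N) :
    heatS N τ (fun y => Real.exp (-‖y‖ ^ 2 / (4 * b))) x =
      ENNReal.ofReal ((b / (b + τ)) ^ ((N : ℝ) / 2) * Real.exp (-‖x‖ ^ 2 / (4 * (b + τ)))) := by
  set c : ℝ := (b + τ) / (4 * b * τ) with hc
  set m : ℝ := b / (b + τ) with hm
  have hbt : 0 < b + τ := by positivity
  have hcpos : 0 < c := by positivity
  have hI : ∫ v : Euc N, Real.exp (-c * ‖v‖ ^ 2) = (Real.pi / c) ^ ((N : ℝ) / 2) := by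
    have := GaussianFourier.integral_rexp_neg_mul_sq_norm (V := Euc N) hcpos
    simpa using this
  have hintg : Integrable (fun v : Euc N => Real.exp (-c * ‖v‖ ^ 2)) := by
    by_contra h
    rw [integral_undef h] at hI
    have : 0 < (Real.pi / c) ^ ((N : ℝ) / 2) := by positivity
    linarith
  have hL : ∫⁻ v : Euc N, ENNReal.ofReal (Real.exp (-c * ‖v - m • x‖ ^ 2)) =
      ENNReal.ofReal ((Real.pi / c) ^ ((N : ℝ) / 2)) := by
    rw [lintegral_sub_right_eq_self (fun v : Euc N => ENNReal.ofReal (Real.exp (-c * ‖v‖ ^ 2))),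
      ← hI, ofReal_integral_eq_lintegral_ofReal hintg]
    exact Eventually.of_forall fun v => (Real.exp_pos _).le
  set A : ℝ := (4 * Real.pi * τ) ^ (-(N : ℝ) / 2) * Real.exp (-‖x‖ ^ 2 / (4 * (b + τ))) with hA
  have hA0 : 0 ≤ A := by positivity
  have key : ∀ y : Euc N, (4 * Real.pi * τ) ^ (-(N : ℝ) / 2) * Real.exp (-‖x - y‖ ^ 2 / (4 * τ)) *
      Real.exp (-‖y‖ ^ 2 / (4 * b)) = A * Real.exp (-c * ‖y - m • x‖ ^ 2) := by
    intro y
    rw [hA]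
    generalize (4 * Real.pi * τ) ^ (-(N : ℝ) / 2) = B
    rw [mul_assoc, mul_assoc, ← Real.exp_add, ← Real.exp_add]
    congr 2
    rw [norm_sub_sq_real, norm_sub_sq_real, inner_smul_right, norm_smul, real_inner_comm,
      Real.norm_of_nonneg (by positivity), hc, hm]
    field_simp
    ring
  unfold heatS
  simp_rw [key, ENNReal.ofReal_mul hA0]
  rw [lintegral_const_mul' _ _ ENNReal.ofReal_ne_top, hL, ← ENNReal.ofReal_mul hA0]
  congr 1
  rw [hA, mul_right_comm]
  congr 1
  have : m = (4 * Real.pi * τ)⁻¹ * (Real.pi / c) := by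
    rw [hc, hm]; field_simp
  rw [this, Real.mul_rpow (x := (4 * Real.pi * τ)⁻¹) (by positivity) (by positivity),
    Real.inv_rpow (by positivity), neg_div,
    Real.rpow_neg (by positivity)]

/-- The scaled heat kernel. -/
def WW (N : ℕ) (δ r : ℝ) (y : Euc N) : ℝ :=
  δ * (r ^ (-(N : ℝ) / 2) * Real.exp (-‖y‖ ^ 2 / (4 * r)))

lemma WW_pos (N : ℕ) {δ r : ℝ} (hδ : 0 < δ) (hr : 0 < r) (y : Euc N) : 0 < WW N δ r y := by
  unfold WW; positivity

lemma WW_le (N : ℕ) {δ r : ℝ} (hδ : 0 < δ) (hr : 0 < r) (y : Euc N) :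
    WW N δ r y ≤ δ * r ^ (-(N : ℝ) / 2) := by
  unfold WW
  have : Real.exp (-‖y‖ ^ 2 / (4 * r)) ≤ 1 := by
    rw [Real.exp_le_one_iff, neg_div]
    have : 0 ≤ ‖y‖ ^ 2 / (4 * r) := by positivity
    linarith
  gcongr
  exact mul_le_of_le_one_right (by positivity) this

lemma heatS_const_mul (N : ℕ) (t c : ℝ) (hc : 0 ≤ c) (φ : Euc N → ℝ) (x : Euc N) :
    heatS N t (fun y => c * φ y) x = ENNReal.ofReal c * heatS N t φ x := by
  unfold heatS
  rw [← lintegral_const_mul' _ _ ENNReal.ofReal_ne_top]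
  congr 1; ext y
  rw [← ENNReal.ofReal_mul hc]; congr 1; ring

lemma heatS_mono (N : ℕ) {t : ℝ} (ht : 0 < t) {φ ψ : Euc N → ℝ} (h : ∀ y, φ y ≤ ψ y) (x : Euc N) :
    heatS N t φ x ≤ heatS N t ψ x := by
  unfold heatS
  refine lintegral_mono fun y => ENNReal.ofReal_le_ofReal ?_
  exact mul_le_mul_of_nonneg_left (h y) (by positivity)

lemma heatS_WW (N : ℕ) {δ r t θ : ℝ} (hδ : 0 < δ) (hr : 0 < r) (ht : 0 < t) (hθ : 0 < θ)
    (hθ1 : θ ≤ 1) (x : Euc N) :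
    heatS N t (fun y => WW N δ r y ^ θ) x ≤ ENNReal.ofReal (WW N δ (r + t) x ^ θ) := by
  have e : ∀ s : ℝ, 0 < s → ∀ y : Euc N, WW N δ s y ^ θ =
      (δ ^ θ * (s ^ θ) ^ (-(N : ℝ) / 2)) * Real.exp (-‖y‖ ^ 2 / (4 * (s / θ))) := by
    intro s hs y
    unfold WW
    rw [Real.mul_rpow hδ.le (by positivity), Real.mul_rpow (by positivity) (by positivity),
      ← Real.exp_mul, ← Real.rpow_mul hs.le, ← Real.rpow_mul hs.le, mul_comm θ, ← mul_assoc]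
    congr 2
    field_simp
  have hrt : 0 < r + t := by positivity
  have hb : 0 < r / θ := by positivity
  simp_rw [e r hr, e (r + t) hrt]
  rw [heatS_const_mul _ _ _ (by positivity), gauss_conv N t (r / θ) ht hb,
    ← ENNReal.ofReal_mul (by positivity)]
  refine ENNReal.ofReal_le_ofReal ?_
  rw [← mul_assoc]
  have hexp : Real.exp (-‖x‖ ^ 2 / (4 * (r / θ + t))) ≤
      Real.exp (-‖x‖ ^ 2 / (4 * ((r + t) / θ))) := by
    rw [Real.exp_le_exp, neg_div, neg_div, neg_le_neg_iff]
    have : r / θ + t ≤ (r + t) / θ := by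
      rw [add_div]
      have : t ≤ t / θ := by rw [le_div_iff₀ hθ]; nlinarith
      linarith
    gcongr
  refine mul_le_mul ?_ hexp (Real.exp_pos _).le (by positivity)
  rw [mul_assoc]
  refine mul_le_mul_of_nonneg_left ?_ (by positivity)
  have hr1 : 0 < r ^ θ := by positivity
  have hr2 : 0 < (r + t) ^ θ := by positivity
  rw [neg_div, Real.rpow_neg hr1.le, Real.rpow_neg hr2.le,
    ← Real.inv_rpow hr1.le, ← Real.inv_rpow hr2.le,
    ← Real.mul_rpow (by positivity) (by positivity)]
  refine Real.rpow_le_rpow (by positivity) ?_ (by positivity)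
  have hB := rpow_one_add_le_one_add_mul_self (s := t / r) (by
    have : 0 ≤ t / r := by positivity
    linarith) hθ.le hθ1
  have h3 : r + t = r * (1 + t / r) := by field_simp
  have h4 : r / θ / (r / θ + t) = (1 + θ * (t / r))⁻¹ := by field_simp
  rw [h4, h3, Real.mul_rpow hr.le (by positivity), mul_inv]
  gcongr

lemma measurable_WW (N : ℕ) (δ r : ℝ) : Measurable (WW N δ r) := by
  unfold WW; fun_prop

lemma heatS_pos (N : ℕ) {t : ℝ} (ht : 0 < t) {φ : Euc N → ℝ} (hm : Measurable φ)
    (h : ∀ y, 0 < φ y) (x : Euc N) : 0 < heatS N t φ x := by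
  unfold heatS
  rw [pos_iff_ne_zero, ne_eq, lintegral_eq_zero_iff (by fun_prop)]
  intro h0
  have : (volume : Measure (Euc N)) = 0 := by
    rw [← ae_eq_bot]
    by_contra hne
    have : NeBot (ae (volume : Measure (Euc N))) := ⟨hne⟩
    obtain ⟨y, hy⟩ := h0.exists
    simp only [Pi.zero_apply, ENNReal.ofReal_eq_zero] at hy
    have := h y
    have : 0 < (4 * Real.pi * t) ^ (-(N : ℝ) / 2) * Real.exp (-‖x - y‖ ^ 2 / (4 * t)) * φ y := by
      positivity
    linarith
  exact NeZero.ne _ this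

/-- The heat kernel as an extended nonnegative number. -/
def hk (N : ℕ) (t : ℝ) (x y : Euc N) : ℝ≥0∞ :=
  ENNReal.ofReal ((4 * Real.pi * t) ^ (-(N : ℝ) / 2) * Real.exp (-‖x - y‖ ^ 2 / (4 * t)))

lemma heatS_eq_hk (N : ℕ) {t : ℝ} (ht : 0 < t) (φ : Euc N → ℝ) (x : Euc N) :
    heatS N t φ x = ∫⁻ y, hk N t x y * ENNReal.ofReal (φ y) := by
  unfold heatS hk
  congr 1; ext y
  rw [ENNReal.ofReal_mul (by positivity)]

/-- The Duhamel operator. -/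
def Phi (N : ℕ) (a b : ℝ) (f : Euc N → ℝ) (u v : Euc N × ℝ → ℝ≥0∞) (z : Euc N × ℝ) : ℝ≥0∞ :=
  heatS N z.2 f z.1 + ∫⁻ s in Set.Ioo 0 z.2, ∫⁻ y, hk N (z.2 - s) z.1 y *
    (u (y, s) ^ a * v (y, s) ^ b)

lemma Phi_meas (N : ℕ) (a b : ℝ) (f : Euc N → ℝ) (hf : Measurable f)
    (u v : Euc N × ℝ → ℝ≥0∞) (hu : Measurable u) (hv : Measurable v) :
    Measurable (Phi N a b f u v) := by
  unfold Phi
  refine Measurable.add ?_ ?_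
  · unfold heatS
    apply Measurable.lintegral_prod_right' (f := fun w : (Euc N × ℝ) × Euc N =>
      ENNReal.ofReal ((4 * Real.pi * w.1.2) ^ (-(N : ℝ) / 2) *
        Real.exp (-‖w.1.1 - w.2‖ ^ 2 / (4 * w.1.2)) * f w.2))
    fun_prop
  · have : ∀ z : Euc N × ℝ, (∫⁻ s in Set.Ioo 0 z.2, ∫⁻ y, hk N (z.2 - s) z.1 y *
        (u (y, s) ^ a * v (y, s) ^ b)) = ∫⁻ s, Set.indicator
          {w : (Euc N × ℝ) × ℝ | 0 < w.2 ∧ w.2 < w.1.2} (fun w => ∫⁻ y, hk N (w.1.2 - w.2) w.1.1 y *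
        (u (y, w.2) ^ a * v (y, w.2) ^ b)) (z, s) := by
      intro z
      rw [← lintegral_indicator measurableSet_Ioo]
      rfl
    simp_rw [this]
    refine Measurable.lintegral_prod_right' ?_
    refine Measurable.indicator ?_ ?_
    · unfold hk
      apply Measurable.lintegral_prod_right' (f := fun w : ((Euc N × ℝ) × ℝ) × Euc N =>
        ENNReal.ofReal ((4 * Real.pi * (w.1.1.2 - w.1.2)) ^ (-(N : ℝ) / 2) *
        Real.exp (-‖w.1.1.1 - w.2‖ ^ 2 / (4 * (w.1.1.2 - w.1.2)))) *
          (u (w.2, w.1.2) ^ a * v (w.2, w.1.2) ^ b))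
      fun_prop
    · exact (measurableSet_lt measurable_const measurable_snd).inter
        (measurableSet_lt measurable_snd (by fun_prop))

lemma Phi_mono (N : ℕ) {a b : ℝ} (ha : 0 ≤ a) (hb : 0 ≤ b) (f : Euc N → ℝ)
    {u v u' v' : Euc N × ℝ → ℝ≥0∞} (hu : u ≤ u') (hv : v ≤ v') :
    Phi N a b f u v ≤ Phi N a b f u' v' := by
  intro z
  unfold Phi
  gcongr
  · exact hu _
  · exact hv _

set_option maxHeartbeats 800000 in
/-- Monotone continuity of the Duhamel operator. -/
lemma Phi_iSup (N : ℕ) {a b : ℝ} (ha : 0 ≤ a) (hb : 0 ≤ b) (f : Euc N → ℝ)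
    (u v : ℕ → Euc N × ℝ → ℝ≥0∞) (hu : Monotone u) (hv : Monotone v)
    (hum : ∀ n, Measurable (u n)) (hvm : ∀ n, Measurable (v n)) (z : Euc N × ℝ) :
    Phi N a b f (fun w => ⨆ n, u n w) (fun w => ⨆ n, v n w) z =
      ⨆ n, Phi N a b f (u n) (v n) z := by
  have hpt : ∀ (k : ℝ≥0∞) (w : Euc N × ℝ), k ≠ ⊤ → k * ((⨆ n, u n w) ^ a * (⨆ n, v n w) ^ b) =
      ⨆ n, k * (u n w ^ a * v n w ^ b) := by
    intro k w _
    have m1 : ∀ c : ℝ, 0 ≤ c → ∀ g : ℕ → ℝ≥0∞, Monotone g → (⨆ n, g n) ^ c = ⨆ n, g n ^ c := by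
      intro c hc g hg
      refine tendsto_nhds_unique (((ENNReal.continuous_rpow_const (y := c)).tendsto _).comp
        (tendsto_atTop_iSup hg)) (tendsto_atTop_iSup ?_)
      exact fun i j hij => ENNReal.rpow_le_rpow (hg hij) hc
    have hu' : Monotone fun n => u n w := fun i j hij => hu hij w
    have hv' : Monotone fun n => v n w := fun i j hij => hv hij w
    rw [m1 a ha _ hu', m1 b hb _ hv', ← ENNReal.mul_iSup]
    congr 1
    refine le_antisymm ?_ ENNReal.iSup_mul_le
    rw [ENNReal.iSup_mul]
    refine iSup_le fun i => ?_
    rw [ENNReal.mul_iSup]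
    refine iSup_le fun j => ?_
    refine le_iSup_of_le (max i j) ?_
    gcongr
    · exact hu' (le_max_left _ _)
    · exact hv' (le_max_right _ _)
  have hm : ∀ n, Measurable fun p : (ℝ × Euc N) => hk N (z.2 - p.1) z.1 p.2 *
      (u n (p.2, p.1) ^ a * v n (p.2, p.1) ^ b) := by
    intro n
    have := hum n
    have := hvm n
    unfold hk
    fun_prop
  have hmono : ∀ s y, Monotone fun n => hk N (z.2 - s) z.1 y * (u n (y, s) ^ a * v n (y, s) ^ b) := by
    intro s y i j hij
    dsimp only
    gcongr
    · exact hu hij _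
    · exact hv hij _
  unfold Phi
  rw [← ENNReal.add_iSup]
  congr 1
  have step1 : ∀ s, (∫⁻ y, hk N (z.2 - s) z.1 y * ((⨆ n, u n (y, s)) ^ a * (⨆ n, v n (y, s)) ^ b)) =
      ⨆ n, ∫⁻ y, hk N (z.2 - s) z.1 y * (u n (y, s) ^ a * v n (y, s) ^ b) := by
    intro s
    have h1 : ∀ n, Measurable fun y => hk N (z.2 - s) z.1 y * (u n (y, s) ^ a * v n (y, s) ^ b) :=
      fun n => by
        have h3 := (hm n).comp (measurable_prodMk_left (x := s))
        simpa only [Function.comp_def] using h3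
    rw [← lintegral_iSup h1 (fun i j hij y => hmono s y hij)]
    refine lintegral_congr fun y => ?_
    exact hpt _ _ ENNReal.ofReal_ne_top
  have h2 : ∀ n, Measurable fun s => ∫⁻ y, hk N (z.2 - s) z.1 y * (u n (y, s) ^ a * v n (y, s) ^ b) :=
    fun n => (hm n).lintegral_prod_right'
  rw [← lintegral_iSup h2 (fun i j hij s => lintegral_mono fun y => hmono s y hij)]
  exact lintegral_congr fun s => step1 s

lemma exists_delta (N : ℕ) (hN : 1 ≤ N) {e : ℝ} (he : 2 / (N : ℝ) < e) :
    ∀ᶠ δ : ℝ in nhdsWithin 0 (Set.Ioi 0), ENNReal.ofReal (δ ^ e) *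
      ∫⁻ s in Set.Ioi (0 : ℝ), ENNReal.ofReal ((s + 1) ^ (-(N : ℝ) / 2 * e)) ≤ ENNReal.ofReal (1 / 2) := by
  have hN0 : (0 : ℝ) < N := by exact_mod_cast hN
  have he0 : 0 < e := lt_trans (by positivity) he
  have hk : -(N : ℝ) / 2 * e < -1 := by
    rw [div_lt_iff₀ hN0] at he
    nlinarith
  have hfin : ∫⁻ s in Set.Ioi (0 : ℝ), ENNReal.ofReal ((s + 1) ^ (-(N : ℝ) / 2 * e)) ≠ ⊤ :=
    (integrableOn_add_rpow_Ioi_of_lt (c := 0) (m := 1) hk (by norm_num)).lintegral_lt_top.ne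
  set C := ∫⁻ s in Set.Ioi (0 : ℝ), ENNReal.ofReal ((s + 1) ^ (-(N : ℝ) / 2 * e))
  have ht : Tendsto (fun δ : ℝ => δ ^ e * C.toReal) (nhdsWithin 0 (Set.Ioi 0)) (nhds 0) := by
    have : Tendsto (fun δ : ℝ => δ ^ e * C.toReal) (nhds 0) (nhds ((0 : ℝ) ^ e * C.toReal)) :=
      ((Real.continuousAt_rpow_const 0 e (Or.inr he0.le)).tendsto).mul_const _
    rw [Real.zero_rpow he0.ne', zero_mul] at this
    exact this.mono_left nhdsWithin_le_nhds
  filter_upwards [ht.eventually (ge_mem_nhds (show (0 : ℝ) < 1 / 2 by norm_num)),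
    self_mem_nhdsWithin] with δ h1 hδ
  have hδ : 0 < δ := hδ
  rw [← ENNReal.ofReal_toReal hfin, ← ENNReal.ofReal_mul (by positivity)]
  exact ENNReal.ofReal_le_ofReal h1

lemma Phi_bound (N : ℕ) {δ θ θ₁ θ₂ a b : ℝ} (hδ : 0 < δ) (hθ : 0 < θ) (hθ1 : θ ≤ 1)
    (ha : 0 ≤ a) (hb : 0 ≤ b) (he : 0 ≤ θ₁ * a + θ₂ * b - θ)
    (hC : ENNReal.ofReal (δ ^ (θ₁ * a + θ₂ * b - θ)) * ∫⁻ s in Set.Ioi (0 : ℝ),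
      ENNReal.ofReal ((s + 1) ^ (-(N : ℝ) / 2 * (θ₁ * a + θ₂ * b - θ))) ≤ ENNReal.ofReal (1 / 2))
    (u v : Euc N × ℝ → ℝ≥0∞)
    (hu : ∀ y s, 0 < s → u (y, s) ≤ ENNReal.ofReal (WW N δ (s + 1) y ^ θ₁))
    (hv : ∀ y s, 0 < s → v (y, s) ≤ ENNReal.ofReal (WW N δ (s + 1) y ^ θ₂))
    (x : Euc N) (t : ℝ) (ht : 0 < t) :
    Phi N a b (fun y => 1 / 2 * WW N δ 1 y ^ θ) u v (x, t) ≤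
      ENNReal.ofReal (WW N δ (t + 1) x ^ θ) := by
  set e := θ₁ * a + θ₂ * b - θ with hedef
  have hW := WW_pos N hδ (show 0 < t + 1 by linarith) x
  have hsrc : ∀ s ∈ Set.Ioo 0 t, (∫⁻ y, hk N (t - s) x y * (u (y, s) ^ a * v (y, s) ^ b)) ≤
      ENNReal.ofReal (δ ^ e) * ENNReal.ofReal ((s + 1) ^ (-(N : ℝ) / 2 * e)) *
        ENNReal.ofReal (WW N δ (t + 1) x ^ θ) := by
    intro s hs
    have hs0 : 0 < s := hs.1
    have hst : 0 < t - s := sub_pos.2 hs.2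
    have hs1 : 0 < s + 1 := by linarith
    calc (∫⁻ y, hk N (t - s) x y * (u (y, s) ^ a * v (y, s) ^ b))
        ≤ ∫⁻ y, hk N (t - s) x y * ENNReal.ofReal
            ((δ ^ e * (s + 1) ^ (-(N : ℝ) / 2 * e)) * WW N δ (s + 1) y ^ θ) := by
          refine lintegral_mono fun y => ?_
          have hWy := WW_pos N hδ hs1 y
          dsimp only
          gcongr
          calc u (y, s) ^ a * v (y, s) ^ b
              ≤ ENNReal.ofReal (WW N δ (s + 1) y ^ θ₁) ^ a *
                ENNReal.ofReal (WW N δ (s + 1) y ^ θ₂) ^ b := by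
                gcongr
                · exact hu y s hs0
                · exact hv y s hs0
            _ = ENNReal.ofReal (WW N δ (s + 1) y ^ e * WW N δ (s + 1) y ^ θ) := by
                rw [ENNReal.ofReal_rpow_of_nonneg (by positivity) ha,
                  ENNReal.ofReal_rpow_of_nonneg (by positivity) hb,
                  ← ENNReal.ofReal_mul (by positivity), ← Real.rpow_mul hWy.le,
                  ← Real.rpow_mul hWy.le, ← Real.rpow_add hWy, ← Real.rpow_add hWy]
                congr 2
                rw [hedef]; ring
            _ ≤ _ := by
                refine ENNReal.ofReal_le_ofReal ?_
                gcongr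
                rw [Real.rpow_mul hs1.le, ← Real.mul_rpow hδ.le (by positivity)]
                exact Real.rpow_le_rpow hWy.le (WW_le N hδ hs1 y) he
      _ = ENNReal.ofReal (δ ^ e) * ENNReal.ofReal ((s + 1) ^ (-(N : ℝ) / 2 * e)) *
            heatS N (t - s) (fun y => WW N δ (s + 1) y ^ θ) x := by
          rw [← heatS_eq_hk N hst, heatS_const_mul _ _ _ (by positivity),
            ENNReal.ofReal_mul (by positivity)]
      _ ≤ _ := by
          gcongr
          have := heatS_WW N hδ hs1 hst hθ hθ1 x
          rwa [show s + 1 + (t - s) = t + 1 by ring] at this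
  unfold Phi
  dsimp only
  have hA : heatS N t (fun y => 1 / 2 * WW N δ 1 y ^ θ) x ≤
      ENNReal.ofReal (1 / 2) * ENNReal.ofReal (WW N δ (t + 1) x ^ θ) := by
    rw [heatS_const_mul _ _ _ (by norm_num)]
    gcongr
    have := heatS_WW N hδ one_pos ht hθ hθ1 x
    rwa [add_comm] at this
  have hB : (∫⁻ s in Set.Ioo 0 t, ∫⁻ y, hk N (t - s) x y * (u (y, s) ^ a * v (y, s) ^ b)) ≤
      ENNReal.ofReal (1 / 2) * ENNReal.ofReal (WW N δ (t + 1) x ^ θ) := by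
    refine (setLIntegral_mono' measurableSet_Ioo hsrc).trans ?_
    rw [lintegral_mul_const' _ _ ENNReal.ofReal_ne_top,
      lintegral_const_mul' _ _ ENNReal.ofReal_ne_top]
    gcongr
    refine le_trans ?_ hC
    gcongr
    exact fun s hs => hs.1
  refine (add_le_add hA hB).trans_eq ?_
  rw [← add_mul, ← ENNReal.ofReal_add (by norm_num) (by norm_num)]
  norm_num

/-- The Picard iteration. -/
def picard (N : ℕ) (p₁ p₂ q₁ q₂ : ℝ) (f g : Euc N → ℝ) :
    ℕ → (Euc N × ℝ → ℝ≥0∞) × (Euc N × ℝ → ℝ≥0∞)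
  | 0 => (0, 0)
  | n + 1 => (Phi N p₁ p₂ f (picard N p₁ p₂ q₁ q₂ f g n).1 (picard N p₁ p₂ q₁ q₂ f g n).2,
      Phi N q₁ q₂ g (picard N p₁ p₂ q₁ q₂ f g n).1 (picard N p₁ p₂ q₁ q₂ f g n).2)

lemma duhamel_convert (N : ℕ) {a b : ℝ} (ha : 0 ≤ a) (hb : 0 ≤ b) (f : Euc N → ℝ)
    (u v : Euc N × ℝ → ℝ≥0∞) (hu : ∀ y s, 0 < s → u (y, s) ≠ ⊤)
    (hv : ∀ y s, 0 < s → v (y, s) ≠ ⊤) (x : Euc N) (t : ℝ) :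
    Phi N a b f u v (x, t) = heatS N t f x + ∫⁻ s in Set.Ioo 0 t,
      heatS N (t - s) (fun y => (u (y, s)).toReal ^ a * (v (y, s)).toReal ^ b) x := by
  unfold Phi
  congr 1
  refine setLIntegral_congr_fun measurableSet_Ioo fun s hs => ?_
  dsimp only
  rw [heatS_eq_hk N (sub_pos.2 hs.2)]
  congr 1; ext y
  rw [ENNReal.ofReal_mul (by positivity), ← ENNReal.ofReal_rpow_of_nonneg (by positivity) ha,
    ← ENNReal.ofReal_rpow_of_nonneg (by positivity) hb, ENNReal.ofReal_toReal (hu y s hs.1),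
    ENNReal.ofReal_toReal (hv y s hs.1)]

lemma locBdd_aux (N : ℕ) {δ θ : ℝ} (hδ : 0 < δ) (hθ : 0 < θ) (u : Euc N × ℝ → ℝ≥0∞)
    (hu : ∀ y s, 0 < s → u (y, s) ≤ ENNReal.ofReal (WW N δ (s + 1) y ^ θ)) :
    LocBdd N ⊤ (fun x t => (u (x, t)).toReal) := by
  intro τ hτ _
  refine ⟨δ ^ θ, fun t ht _ => Eventually.of_forall fun x => ?_⟩
  have ht0 : 0 < t := lt_of_lt_of_le hτ ht
  have hW := WW_pos N hδ (show 0 < t + 1 by linarith) x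
  rw [abs_of_nonneg ENNReal.toReal_nonneg]
  refine ENNReal.toReal_le_of_le_ofReal (by positivity) ((hu x t ht0).trans ?_)
  refine ENNReal.ofReal_le_ofReal (Real.rpow_le_rpow hW.le ?_ hθ.le)
  refine (WW_le N hδ (by linarith) x).trans (mul_le_of_le_one_right hδ.le ?_)
  refine Real.rpow_le_one_of_one_le_of_nonpos (by linarith) ?_
  rw [neg_div]
  have : (0 : ℝ) ≤ (N : ℝ) / 2 := by positivity
  linarith

/-- Theorem 4.2 (ii) for `Ω = ℝ^N`: if `1 + (p₁-1)/α + p₂/β > 1 + 2/N` and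
`1 + q₁/α + (q₂-1)/β > 1 + 2/N` for some `α, β ≥ 1`, then for some nonnegative data, not both
identically zero, the strongly coupled system (SC) has a global-in-time positive solution. -/
theorem statement19 (N : ℕ) (hN : 1 ≤ N) (p₁ p₂ q₁ q₂ : ℝ)
    (hp₁ : 0 ≤ p₁) (hp₂ : 0 ≤ p₂) (hq₁ : 0 ≤ q₁) (hq₂ : 0 ≤ q₂)
    (α β : ℝ) (hα : 1 ≤ α) (hβ : 1 ≤ β)
    (h1 : 1 + 2 / (N : ℝ) < 1 + (p₁ - 1) / α + p₂ / β)
    (h2 : 1 + 2 / (N : ℝ) < 1 + q₁ / α + (q₂ - 1) / β) :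
    ∃ u₀ v₀ : Euc N → ℝ, Measurable u₀ ∧ Measurable v₀ ∧
      (∀ x, 0 ≤ u₀ x) ∧ (∀ x, 0 ≤ v₀ x) ∧
      ¬((∀ x, u₀ x = 0) ∧ (∀ x, v₀ x = 0)) ∧
      ∃ u v : Euc N → ℝ → ℝ, IsSolSC N p₁ p₂ q₁ q₂ u₀ v₀ ⊤ u v ∧
        ∀ t : ℝ, 0 < t →
          ∀ᵐ x ∂(volume : Measure (Euc N)), 0 < u x t ∧ 0 < v x t := by
  have hα0 : 0 < α := by linarith
  have hβ0 : 0 < β := by linarith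
  have hN0 : (0 : ℝ) < N := by exact_mod_cast hN
  have h2N : 0 < 2 / (N : ℝ) := by positivity
  set θ₁ : ℝ := 1 / α with hθ₁
  set θ₂ : ℝ := 1 / β with hθ₂
  have t1 : 0 < θ₁ := by positivity
  have t2 : 0 < θ₂ := by positivity
  have t1' : θ₁ ≤ 1 := by rw [hθ₁, div_le_one hα0]; exact hα
  have t2' : θ₂ ≤ 1 := by rw [hθ₂, div_le_one hβ0]; exact hβ
  have e1 : 2 / (N : ℝ) < θ₁ * p₁ + θ₂ * p₂ - θ₁ := by
    have : θ₁ * p₁ + θ₂ * p₂ - θ₁ = (p₁ - 1) / α + p₂ / β := by rw [hθ₁, hθ₂]; ring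
    linarith
  have e2 : 2 / (N : ℝ) < θ₁ * q₁ + θ₂ * q₂ - θ₂ := by
    have : θ₁ * q₁ + θ₂ * q₂ - θ₂ = q₁ / α + (q₂ - 1) / β := by rw [hθ₁, hθ₂]; ring
    linarith
  obtain ⟨δ, ⟨hC1, hC2⟩, hδ⟩ := (((exists_delta N hN e1).and (exists_delta N hN e2)).and
    self_mem_nhdsWithin).exists
  have hδ : 0 < δ := hδ
  set f : Euc N → ℝ := fun y => 1 / 2 * WW N δ 1 y ^ θ₁ with hf
  set g : Euc N → ℝ := fun y => 1 / 2 * WW N δ 1 y ^ θ₂ with hg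
  have hfm : Measurable f := ((measurable_WW N δ 1).pow_const _).const_mul _
  have hgm : Measurable g := ((measurable_WW N δ 1).pow_const _).const_mul _
  have hfpos : ∀ y, 0 < f y := fun y => by
    have := WW_pos N hδ one_pos y
    rw [hf]; positivity
  have hgpos : ∀ y, 0 < g y := fun y => by
    have := WW_pos N hδ one_pos y
    rw [hg]; positivity
  set P := picard N p₁ p₂ q₁ q₂ f g with hP
  have hPs : ∀ n, P (n + 1) = (Phi N p₁ p₂ f (P n).1 (P n).2, Phi N q₁ q₂ g (P n).1 (P n).2) :=
    fun n => rfl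
  have hP0 : P 0 = (0, 0) := rfl
  have hPm : ∀ n, Measurable (P n).1 ∧ Measurable (P n).2 := by
    intro n
    induction n with
    | zero => rw [hP0]; exact ⟨measurable_zero, measurable_zero⟩
    | succ n ih =>
      rw [hPs]
      exact ⟨Phi_meas N _ _ f hfm _ _ ih.1 ih.2, Phi_meas N _ _ g hgm _ _ ih.1 ih.2⟩
  have hPmono : Monotone P := by
    refine monotone_nat_of_le_succ fun n => ?_
    induction n with
    | zero => rw [hP0]; exact ⟨fun _ => zero_le, fun _ => zero_le⟩
    | succ n ih =>
      rw [hPs (n + 1), hPs n]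
      rw [hPs n] at ih
      exact ⟨Phi_mono N hp₁ hp₂ f ih.1 ih.2, Phi_mono N hq₁ hq₂ g ih.1 ih.2⟩
  have hPb : ∀ n, (∀ y s, 0 < s → (P n).1 (y, s) ≤ ENNReal.ofReal (WW N δ (s + 1) y ^ θ₁)) ∧
      (∀ y s, 0 < s → (P n).2 (y, s) ≤ ENNReal.ofReal (WW N δ (s + 1) y ^ θ₂)) := by
    intro n
    induction n with
    | zero => rw [hP0]; exact ⟨fun _ _ _ => zero_le, fun _ _ _ => zero_le⟩
    | succ n ih =>
      rw [hPs]
      exact ⟨fun y s hs => Phi_bound N hδ t1 t1' hp₁ hp₂ (by linarith) hC1 _ _ ih.1 ih.2 y s hs,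
        fun y s hs => Phi_bound N hδ t2 t2' hq₁ hq₂ (by linarith) hC2 _ _ ih.1 ih.2 y s hs⟩
  set U : Euc N × ℝ → ℝ≥0∞ := fun w => ⨆ n, (P n).1 w with hU
  set V : Euc N × ℝ → ℝ≥0∞ := fun w => ⨆ n, (P n).2 w with hV
  have hUm : Measurable U := Measurable.iSup fun n => (hPm n).1
  have hVm : Measurable V := Measurable.iSup fun n => (hPm n).2
  have hUb : ∀ y s, 0 < s → U (y, s) ≤ ENNReal.ofReal (WW N δ (s + 1) y ^ θ₁) :=
    fun y s hs => iSup_le fun n => (hPb n).1 y s hs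
  have hVb : ∀ y s, 0 < s → V (y, s) ≤ ENNReal.ofReal (WW N δ (s + 1) y ^ θ₂) :=
    fun y s hs => iSup_le fun n => (hPb n).2 y s hs
  have hM1 : Monotone fun n => (P n).1 := fun i j hij => (hPmono hij).1
  have hM2 : Monotone fun n => (P n).2 := fun i j hij => (hPmono hij).2
  have hUeq : ∀ z, U z = Phi N p₁ p₂ f U V z := by
    intro z
    rw [hU, hV, Phi_iSup N hp₁ hp₂ f _ _ hM1 hM2 (fun n => (hPm n).1) (fun n => (hPm n).2)]
    dsimp only
    rw [← Monotone.iSup_nat_add (f := fun n => (P n).1 z) (fun i j hij => hM1 hij z) 1]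
    rfl
  have hVeq : ∀ z, V z = Phi N q₁ q₂ g U V z := by
    intro z
    rw [hU, hV, Phi_iSup N hq₁ hq₂ g _ _ hM1 hM2 (fun n => (hPm n).1) (fun n => (hPm n).2)]
    dsimp only
    rw [← Monotone.iSup_nat_add (f := fun n => (P n).2 z) (fun i j hij => hM2 hij z) 1]
    rfl
  have hUt : ∀ y s, 0 < s → U (y, s) ≠ ⊤ := fun y s hs =>
    ne_top_of_le_ne_top ENNReal.ofReal_ne_top (hUb y s hs)
  have hVt : ∀ y s, 0 < s → V (y, s) ≠ ⊤ := fun y s hs =>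
    ne_top_of_le_ne_top ENNReal.ofReal_ne_top (hVb y s hs)
  refine ⟨f, g, hfm, hgm, fun x => (hfpos x).le, fun x => (hgpos x).le,
    fun h => (hfpos 0).ne' (h.1 0), fun x t => (U (x, t)).toReal, fun x t => (V (x, t)).toReal,
    ⟨⟨fun _ _ => ENNReal.toReal_nonneg, fun _ _ => ENNReal.toReal_nonneg,
      hUm.ennreal_toReal, hVm.ennreal_toReal, locBdd_aux N hδ t1 U hUb,
      locBdd_aux N hδ t2 V hVb⟩, fun t ht _ => ⟨?_, ?_⟩⟩, fun t ht => ?_⟩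
  · refine Eventually.of_forall fun x => ?_
    rw [ENNReal.ofReal_toReal (hUt x t ht), hUeq]
    exact duhamel_convert N hp₁ hp₂ f U V hUt hVt x t
  · refine Eventually.of_forall fun x => ?_
    rw [ENNReal.ofReal_toReal (hVt x t ht), hVeq]
    exact duhamel_convert N hq₁ hq₂ g U V hUt hVt x t
  · refine Eventually.of_forall fun x => ⟨ENNReal.toReal_pos ?_ (hUt x t ht),
      ENNReal.toReal_pos ?_ (hVt x t ht)⟩
    · rw [hUeq]
      exact ((heatS_pos N ht hfm hfpos x).trans_le le_self_add).ne'
    · rw [hVeq]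
      exact ((heatS_pos N ht hgm hgpos x).trans_le le_self_add).ne'
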